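/- For 0 < q < 1 and integer k ≥ 2, ζ_q(k) = (1−q)^k ∑_{n=1}^∞ C(n, k−1) q^n/(1−q^n), where ζ_q(k) = ∑_{n≥1} q^{n(k−1)}/[n]_q^k. -/

import Mathlib

/-!
With `x = q ^ n`, the `n`-th term of `ζ_q(k)` is `(1 - q) ^ k * x ^ (k - 1) / (1 - x) ^ k`, and
`x ^ (k - 1) / (1 - x) ^ k = ∑ C(m, k - 1) x ^ m` is the generating function of a column of
Pascal's triangle. Summing over `n` first instead of over `m` turns the double series
`∑ C(m, k - 1) q ^ (n * m)` into a Lambert series.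
-/

section NormedField

variable {𝕜 : Type*} [NormedField 𝕜]

theorem hasSum_pow_succ_of_norm_lt_one {x : 𝕜} (hx : ‖x‖ < 1) :
    HasSum (fun n : ℕ => x ^ (n + 1)) (x / (1 - x)) := by
  simpa only [pow_succ', div_eq_mul_inv] using (hasSum_geometric_of_norm_lt_one hx).mul_left x

theorem summable_norm_natChoose_mul_pow (k : ℕ) {x : 𝕜} (hx : ‖x‖ < 1) :
    Summable fun n : ℕ => ‖(n.choose k : 𝕜) * x ^ n‖ := by
  refine summable_norm_mul_geometric_of_norm_lt_one (k := k) hx (.of_norm_le fun n => ?_)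
  rw [Real.norm_natCast]
  exact_mod_cast Nat.choose_le_pow n k

theorem hasSum_natChoose_mul_pow (k : ℕ) {x : 𝕜} (hx : ‖x‖ < 1) :
    HasSum (fun n : ℕ => (n.choose k : 𝕜) * x ^ n) (x ^ k / (1 - x) ^ (k + 1)) := by
  have initial_sum_eq_zero : ∑ n ∈ Finset.range k, (n.choose k : 𝕜) * x ^ n = 0 :=
    Finset.sum_eq_zero fun n hn => by
      rw [Nat.choose_eq_zero_of_lt (Finset.mem_range.mp hn), Nat.cast_zero, zero_mul]
  rw [← hasSum_nat_add_iff' k, initial_sum_eq_zero, sub_zero]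
  simpa only [pow_add _ _ k, mul_assoc, one_div_mul_eq_div] using
    (hasSum_choose_mul_geometric_of_norm_lt_one k hx).mul_right (x ^ k)

theorem hasSum_natChoose_succ_mul_pow_succ {k : ℕ} (hk : k ≠ 0) {x : 𝕜} (hx : ‖x‖ < 1) :
    HasSum (fun n : ℕ => ((n + 1).choose k : 𝕜) * x ^ (n + 1)) (x ^ k / (1 - x) ^ (k + 1)) := by
  have h := hasSum_natChoose_mul_pow k hx
  rwa [← hasSum_nat_add_iff' 1, Finset.sum_range_one,
    Nat.choose_eq_zero_of_lt (Nat.pos_of_ne_zero hk), Nat.cast_zero, zero_mul, sub_zero] at h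

theorem norm_pow_succ_lt_one {q : 𝕜} (hq : ‖q‖ < 1) (n : ℕ) : ‖q ^ (n + 1)‖ < 1 := by
  simpa only [norm_pow] using pow_lt_one₀ (norm_nonneg q) hq n.succ_ne_zero

variable [CompleteSpace 𝕜] {a : ℕ → 𝕜} {q : 𝕜}

theorem summable_mul_pow_succ_pow_succ (hq : ‖q‖ < 1) (ha : Summable fun m => ‖a m * q ^ m‖) :
    Summable (Function.uncurry fun m n : ℕ => a (m + 1) * (q ^ (m + 1)) ^ (n + 1)) := by
  have majorant : Summable fun p : ℕ × ℕ => ‖a (p.1 + 1) * q ^ (p.1 + 1)‖ * ‖q‖ ^ p.2 :=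
    ((summable_nat_add_iff 1).mpr ha).mul_of_nonneg
      (summable_geometric_of_lt_one (norm_nonneg q) hq)
      (fun _ => norm_nonneg _) (fun _ => by positivity)
  refine majorant.of_norm_bounded fun ⟨m, n⟩ => ?_
  calc ‖a (m + 1) * (q ^ (m + 1)) ^ (n + 1)‖
      = ‖a (m + 1) * q ^ (m + 1)‖ * ‖q‖ ^ ((m + 1) * n) := by
        rw [pow_succ', ← mul_assoc, norm_mul, ← pow_mul, norm_pow]
    _ ≤ ‖a (m + 1) * q ^ (m + 1)‖ * ‖q‖ ^ n :=
        mul_le_mul_of_nonneg_left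
          (pow_le_pow_of_le_one (norm_nonneg q) hq.le (Nat.le_mul_of_pos_left n m.succ_pos))
          (norm_nonneg _)

theorem tsum_lambert_eq_tsum_tsum (hq : ‖q‖ < 1) (ha : Summable fun m => ‖a m * q ^ m‖) :
    ∑' m : ℕ, a (m + 1) * q ^ (m + 1) / (1 - q ^ (m + 1)) =
      ∑' n : ℕ, ∑' m : ℕ, a (m + 1) * (q ^ (n + 1)) ^ (m + 1) := by
  calc ∑' m : ℕ, a (m + 1) * q ^ (m + 1) / (1 - q ^ (m + 1))
      = ∑' m : ℕ, ∑' n : ℕ, a (m + 1) * (q ^ (m + 1)) ^ (n + 1) := by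
        refine tsum_congr fun m => ?_
        rw [tsum_mul_left, (hasSum_pow_succ_of_norm_lt_one (norm_pow_succ_lt_one hq m)).tsum_eq,
          mul_div_assoc]
    _ = ∑' n : ℕ, ∑' m : ℕ, a (m + 1) * (q ^ (m + 1)) ^ (n + 1) :=
        (summable_mul_pow_succ_pow_succ hq ha).tsum_comm.symm
    _ = ∑' n : ℕ, ∑' m : ℕ, a (m + 1) * (q ^ (n + 1)) ^ (m + 1) := by
        simp only [pow_right_comm]

theorem stmt_13_general (hq : ‖q‖ < 1) {k : ℕ} (hk : 2 ≤ k) :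
    ∑' n : ℕ, q ^ ((n + 1) * (k - 1)) / (((1 - q ^ (n + 1)) / (1 - q)) ^ k)
      = (1 - q) ^ k *
          ∑' n : ℕ, ((n + 1).choose (k - 1) : 𝕜) * q ^ (n + 1) / (1 - q ^ (n + 1)) := by
  have hk_pred : k - 1 ≠ 0 := by lia
  have column_sum (n : ℕ) : ∑' m : ℕ, ((m + 1).choose (k - 1) : 𝕜) * (q ^ (n + 1)) ^ (m + 1) =
      (q ^ (n + 1)) ^ (k - 1) / (1 - q ^ (n + 1)) ^ k := by
    rw [(hasSum_natChoose_succ_mul_pow_succ hk_pred (norm_pow_succ_lt_one hq n)).tsum_eq,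
      Nat.sub_add_cancel (one_le_two.trans hk)]
  rw [tsum_lambert_eq_tsum_tsum (a := fun m => (m.choose (k - 1) : 𝕜)) hq
    (summable_norm_natChoose_mul_pow (k - 1) hq), ← tsum_mul_left]
  refine tsum_congr fun n => ?_
  rw [column_sum, pow_mul, div_pow, div_div_eq_mul_div, mul_comm, mul_div_assoc]

end NormedField

theorem stmt_13 (q : ℝ) (hq0 : 0 < q) (hq1 : q < 1) (k : ℕ) (hk : 2 ≤ k) :
    ∑' n : ℕ, q ^ ((n + 1) * (k - 1)) / (((1 - q ^ (n + 1)) / (1 - q)) ^ k)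
      = (1 - q) ^ k *
          ∑' n : ℕ, ((n + 1).choose (k - 1) : ℝ) * q ^ (n + 1) / (1 - q ^ (n + 1)) :=
  stmt_13_general (by rwa [Real.norm_of_nonneg hq0.le]) hk
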